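/- arXiv:2106.03448 — 2 statements merged into one kernel-verified Lean document; each statement's English description precedes it below -/
import Mathlib

section
/- Let A₀ : D(A₀) ⊂ H₀ → H₁ and A₁ : D(A₁) ⊂ H₁ → H₂ be densely defined closed linear operators between Hilbert spaces satisfying R(A₀) ⊂ N(A₁), and suppose the embedding D(A₁) ∩ D(A₀*) ↪ H₁ is compact. Then there exist constants c₀, c₁ > 0 such that: ‖x‖_{H₀} ≤ c₀‖A₀x‖_{H₁} for all x ∈ D(A₀) ∩ N(A₀)^⊥; ‖y‖_{H₁} ≤ c₀‖A₀*y‖_{H₀} for all y ∈ D(A₀*) ∩ N(A₀*)^⊥; ‖y‖_{H₁} ≤ c₁‖A₁y‖_{H₂} for all y ∈ D(A₁) ∩ N(A₁)^⊥; ‖z‖_{H₂} ≤ c₁‖A₁*z‖_{H₁} for all z ∈ D(A₁*) ∩ N(A₁*)^⊥; and moreover the combined estimate ‖y‖²_{H₁} ≤ c₀²‖A₀*y‖²_{H₀} + c₁²‖A₁y‖²_{H₂} holds for all y ∈ D(A₁) ∩ D(A₀*) with y ⊥ N_{0,1}. -/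
/-!
The estimate for `A₁` is a compactness argument: `N(A₁)ᗮ ⊆ R(A₀)ᗮ = N(A₀†)`, so a normalised
sequence in `D(A₁) ∩ N(A₁)ᗮ` with `A₁ yₙ → 0` is bounded in `D(A₁) ∩ D(A₀†)`; a limit point is
a unit vector in `N(A₁) ∩ N(A₁)ᗮ`, which is absurd. The estimate for `A₀†` is the same argument,
using `N(A₀†)ᗮ = closure R(A₀) ⊆ N(A₁)` (`exists_bound_of_compact` covers both).

The estimates pass to the adjoint operators with the same constant (`bound_transfer`): for
`z ∈ N(T)ᗮ ⊆ closure R(S)` with `T` formally adjoint to `S`, one bounds `⟪z, S x⟫ = ⟪T z, x⟫` with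
`x` chosen in `N(S)ᗮ`, and lets `S x` tend to `z`. For `T = A₀` and `S = A₀†` this needs
`R(A₀†)ᗮ ⊆ N(A₀)`, which holds because the graph of `A₀` is closed
(`orthogonal_range_adjoint_le`).

For the combined estimate, split `y = p + q` orthogonally with `p ∈ N(A₁)` and `q ∈ N(A₁)ᗮ`.
Then `A₁ q = A₁ y`, `A₀† p = A₀† y`, and `y ⊥ N(A₁) ∩ N(A₀†)` forces `p ∈ N(A₀†)ᗮ`, so
the estimates for `A₀†` and `A₁` apply to `p` and `q`.
-/

open Filter Topology

noncomputable section

/-- The kernel `N(A)` of a partially defined linear operator `A`, as a submodule of the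
ambient space. -/
def LinearPMap.kerSub {𝕜 E F : Type*} [RCLike 𝕜] [NormedAddCommGroup E]
    [InnerProductSpace 𝕜 E] [NormedAddCommGroup F] [InnerProductSpace 𝕜 F]
    (A : E →ₗ.[𝕜] F) : Submodule 𝕜 E :=
  (LinearMap.ker A.toFun).map A.domain.subtype

namespace LinearPMap

variable {𝕜 E F : Type*} [RCLike 𝕜] [NormedAddCommGroup E] [InnerProductSpace 𝕜 E]
  [NormedAddCommGroup F] [InnerProductSpace 𝕜 F]

theorem mem_kerSub_iff (A : E →ₗ.[𝕜] F) (x : E) :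
    x ∈ A.kerSub ↔ ∃ h : x ∈ A.domain, A ⟨x, h⟩ = 0 := by
  unfold kerSub
  rw [Submodule.mem_map]
  constructor
  · rintro ⟨⟨y, hy⟩, h, rfl⟩
    exact ⟨hy, h⟩
  · rintro ⟨h, h'⟩
    exact ⟨⟨x, h⟩, h', rfl⟩

theorem mem_kerSub_iff_graph (A : E →ₗ.[𝕜] F) (x : E) :
    x ∈ A.kerSub ↔ (x, (0 : F)) ∈ A.graph := by
  rw [mem_kerSub_iff, mem_graph_iff]
  constructor
  · rintro ⟨h, h'⟩
    exact ⟨⟨x, h⟩, rfl, h'⟩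
  · rintro ⟨⟨y, hy⟩, h, h'⟩
    obtain rfl : y = x := h
    exact ⟨hy, h'⟩

theorem isClosed_kerSub {A : E →ₗ.[𝕜] F} (hA : A.IsClosed) :
    _root_.IsClosed (A.kerSub : Set E) := by
  have h : (A.kerSub : Set E) = (fun x : E => (x, (0 : F))) ⁻¹' (A.graph : Set (E × F)) := by
    ext x
    exact A.mem_kerSub_iff_graph x
  rw [h]
  exact _root_.IsClosed.preimage (by fun_prop) hA

/-- If bounded-graph-norm sequences in `D(A) ∩ N(A)ᗮ` have convergent subsequences, then the
closed operator `A` is bounded below on `D(A) ∩ N(A)ᗮ`. -/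
theorem exists_bound_of_compact {A : E →ₗ.[𝕜] F} (hA : A.IsClosed)
    (hc : ∀ x : ℕ → A.domain, (∀ n, (x n : E) ∈ A.kerSubᗮ) →
      (∀ n, ‖(x n : E)‖ ≤ 1) → (∀ n, ‖A (x n)‖ ≤ 1) →
      ∃ φ : ℕ → ℕ, StrictMono φ ∧ ∃ l : E, Tendsto (fun n => (x (φ n) : E)) atTop (𝓝 l)) :
    ∃ c : ℝ, 0 < c ∧ ∀ x : A.domain, (x : E) ∈ A.kerSubᗮ → ‖(x : E)‖ ≤ c * ‖A x‖ := by
  by_contra! hcon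
  have hex : ∀ n : ℕ, ∃ x : A.domain, (x : E) ∈ A.kerSubᗮ ∧ ‖(x : E)‖ = 1 ∧
      ‖A x‖ ≤ 1 / ((n : ℝ) + 1) := by
    intro n
    obtain ⟨x, hx, hlt⟩ := hcon ((n : ℝ) + 1) (by positivity)
    have hn : (0 : ℝ) < (n : ℝ) + 1 := by positivity
    have hpos : 0 < ‖(x : E)‖ := lt_of_le_of_lt (by positivity) hlt
    refine ⟨((‖(x : E)‖⁻¹ : ℝ) : 𝕜) • x, ?_, ?_, ?_⟩
    · exact Submodule.smul_mem _ _ hx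
    · rw [Submodule.coe_smul, norm_smul, RCLike.norm_ofReal, abs_of_pos (by positivity)]
      field_simp
    · rw [map_smul, norm_smul, RCLike.norm_ofReal, abs_of_pos (by positivity),
        le_div_iff₀ hn, inv_mul_eq_div, div_mul_eq_mul_div, div_le_one hpos]
      linarith
  choose x hxk hx1 hxA using hex
  obtain ⟨φ, hφ, l, hl⟩ := hc x hxk (fun n => (hx1 n).le) (fun n => (hxA n).trans (by
    rw [div_le_one (by positivity)]
    linarith [Nat.cast_nonneg (α := ℝ) n]))
  have hA0 : Tendsto (fun n => A (x (φ n))) atTop (𝓝 0) :=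
    (squeeze_zero_norm hxA tendsto_one_div_add_atTop_nhds_zero_nat).comp hφ.tendsto_atTop
  have hlk : l ∈ A.kerSub := by
    rw [mem_kerSub_iff_graph]
    have hg : _root_.IsClosed (A.graph : Set (E × F)) := hA
    exact hg.mem_of_tendsto (hl.prodMk_nhds hA0)
      (Eventually.of_forall fun n => A.mem_graph (x (φ n)))
  have hlo : l ∈ A.kerSubᗮ :=
    (Submodule.isClosed_orthogonal A.kerSub).mem_of_tendsto hl
      (Eventually.of_forall fun n => hxk (φ n))
  have hl0 : l = 0 := inner_self_eq_zero.mp (hlo l hlk)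
  have hl1 : ‖l‖ = 1 :=
    tendsto_nhds_unique hl.norm (by simp only [hx1]; exact tendsto_const_nhds)
  simp [hl0] at hl1

/-- A closed operator maps `D(A) ∩ N(A)ᗮ` onto its whole range. -/
theorem exists_reduced_preimage [CompleteSpace E] {A : E →ₗ.[𝕜] F} (hA : A.IsClosed)
    (x : A.domain) : ∃ x' : A.domain, (x' : E) ∈ A.kerSubᗮ ∧ A x' = A x ∧
      (x : E) - x' ∈ A.kerSub := by
  have : CompleteSpace A.kerSub := (isClosed_kerSub hA).completeSpace_coe
  have hp : A.kerSub.starProjection (x : E) ∈ A.kerSub := Submodule.starProjection_apply_mem _ _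
  obtain ⟨hd, h0⟩ := (A.mem_kerSub_iff _).mp hp
  refine ⟨x - ⟨_, hd⟩, ?_, ?_, ?_⟩
  · exact Submodule.sub_starProjection_mem_orthogonal _
  · rw [map_sub, h0, sub_zero]
  · simp

/-- A lower bound for `S` on its reduced domain passes, with the same constant, to a formal
adjoint `T` whose kernel is all of `R(S)ᗮ`. -/
theorem bound_transfer [CompleteSpace E] [CompleteSpace F] {S : E →ₗ.[𝕜] F} {T : F →ₗ.[𝕜] E}
    (hS : S.IsClosed) (hTS : T.IsFormalAdjoint S)
    (hker : (LinearMap.range S.toFun)ᗮ ≤ T.kerSub) {c : ℝ}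
    (hc : ∀ x : S.domain, (x : E) ∈ S.kerSubᗮ → ‖(x : E)‖ ≤ c * ‖S x‖)
    (z : T.domain) (hz : (z : F) ∈ T.kerSubᗮ) : ‖(z : F)‖ ≤ c * ‖T z‖ := by
  have hzcl : (z : F) ∈ _root_.closure (LinearMap.range S.toFun : Set F) := by
    have h := Submodule.orthogonal_le hker hz
    rw [Submodule.orthogonal_orthogonal_eq_closure] at h
    exact h
  have hcl : _root_.IsClosed {w : F | ‖inner 𝕜 (z : F) w‖ ≤ c * ‖T z‖ * ‖w‖} :=
    isClosed_le (by fun_prop) (by fun_prop)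
  have hsub : (LinearMap.range S.toFun : Set F) ⊆
      {w : F | ‖inner 𝕜 (z : F) w‖ ≤ c * ‖T z‖ * ‖w‖} := by
    rintro _ ⟨x, rfl⟩
    obtain ⟨x', hx', hSx, -⟩ := exists_reduced_preimage hS x
    change ‖inner 𝕜 (z : F) (S x)‖ ≤ c * ‖T z‖ * ‖S x‖
    rw [← hSx, ← hTS z x']
    calc ‖inner 𝕜 (T z) (x' : E)‖ ≤ ‖T z‖ * ‖(x' : E)‖ := norm_inner_le_norm _ _
      _ ≤ ‖T z‖ * (c * ‖S x'‖) := by gcongr; exact hc x' hx'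
      _ = c * ‖T z‖ * ‖S x'‖ := by ring
  have hmain : ‖inner 𝕜 (z : F) (z : F)‖ ≤ c * ‖T z‖ * ‖(z : F)‖ :=
    closure_minimal hsub hcl hzcl
  rw [inner_self_eq_norm_sq_to_K, norm_pow, RCLike.norm_ofReal, abs_norm, sq] at hmain
  rcases (norm_nonneg (z : F)).eq_or_lt with h0 | h0
  · have hz0 : z = 0 := Subtype.ext (norm_eq_zero.mp h0.symm)
    simp [hz0]
  · exact le_of_mul_le_mul_right hmain h0

theorem orthogonal_range_le_kerSub_adjoint [CompleteSpace E] {A : E →ₗ.[𝕜] F}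
    (hd : Dense (A.domain : Set E)) : (LinearMap.range A.toFun)ᗮ ≤ A.adjoint.kerSub := by
  intro y hy
  have h : ∀ x : A.domain, inner 𝕜 (0 : E) (x : E) = inner 𝕜 y (A x) := by
    intro x
    rw [inner_zero_left]
    exact (Submodule.inner_left_of_mem_orthogonal (LinearMap.mem_range_self A.toFun x) hy).symm
  rw [mem_kerSub_iff]
  exact ⟨mem_adjoint_domain_of_exists y ⟨0, h⟩, adjoint_apply_eq hd _ h⟩

/-- For a closed densely defined operator, `R(A†)ᗮ ⊆ N(A)`. The pair `(z, 0)` is orthogonal to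
every vector orthogonal to the graph of `A` in the `L²` product, since such a vector is
`(-A† w, w)`; hence it lies in the closed graph. -/
theorem orthogonal_range_adjoint_le [CompleteSpace E] [CompleteSpace F] {A : E →ₗ.[𝕜] F}
    (hd : Dense (A.domain : Set E)) (hA : A.IsClosed) :
    (LinearMap.range A.adjoint.toFun)ᗮ ≤ A.kerSub := by
  intro z hz
  let G : Submodule 𝕜 (WithLp 2 (E × F)) :=
    A.graph.comap (WithLp.linearEquiv 2 𝕜 (E × F)).toLinearMap
  have hG : _root_.IsClosed (G : Set (WithLp 2 (E × F))) :=
    _root_.IsClosed.preimage (WithLp.prod_continuous_ofLp 2 E F) hA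
  have hmem : WithLp.toLp 2 (z, (0 : F)) ∈ Gᗮᗮ := by
    rw [Submodule.mem_orthogonal]
    intro u hu
    have h : ∀ x : A.domain, inner 𝕜 (-u.fst) (x : E) = inner 𝕜 u.snd (A x) := by
      intro x
      have hx : WithLp.toLp 2 ((x : E), A x) ∈ G := A.mem_graph x
      have h0 := Submodule.inner_left_of_mem_orthogonal hx hu
      rw [WithLp.prod_inner_apply] at h0
      rw [inner_neg_left]
      exact neg_eq_of_add_eq_zero_right h0
    have hdom : u.snd ∈ A.adjoint.domain := mem_adjoint_domain_of_exists _ ⟨_, h⟩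
    have happ : A.adjoint ⟨u.snd, hdom⟩ = -u.fst := adjoint_apply_eq hd _ h
    have h1 := Submodule.inner_right_of_mem_orthogonal
      (LinearMap.mem_range_self A.adjoint.toFun ⟨u.snd, hdom⟩) hz
    change inner 𝕜 (A.adjoint ⟨u.snd, hdom⟩) z = 0 at h1
    rw [happ, inner_neg_left, neg_eq_zero] at h1
    rw [WithLp.prod_inner_apply]
    change inner 𝕜 u.fst z + inner 𝕜 u.snd (0 : F) = 0
    rw [h1, inner_zero_right, add_zero]
  have hc : CompleteSpace G := hG.completeSpace_coe
  rw [Submodule.orthogonal_orthogonal] at hmem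
  rw [mem_kerSub_iff_graph]
  exact hmem

end LinearPMap

open LinearPMap

/-- For a Hilbert complex `A₀, A₁` such that the embedding
`D(A₁) ∩ D(A₀*) ↪ H₁` is compact, there exist constants `c₀, c₁ > 0` such that the four
Friedrichs/Poincaré type estimates for `A₀`, `A₀*`, `A₁`, `A₁*` hold on the respective reduced
domains, together with the combined estimate
`‖y‖² ≤ c₀²‖A₀*y‖² + c₁²‖A₁y‖²` for `y ∈ D(A₁) ∩ D(A₀*)` with `y ⊥ N₀₁`. -/
theorem mini_FAT_estimates
    {𝕜 H₀ H₁ H₂ : Type*} [RCLike 𝕜]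
    [NormedAddCommGroup H₀] [InnerProductSpace 𝕜 H₀] [CompleteSpace H₀]
    [NormedAddCommGroup H₁] [InnerProductSpace 𝕜 H₁] [CompleteSpace H₁]
    [NormedAddCommGroup H₂] [InnerProductSpace 𝕜 H₂] [CompleteSpace H₂]
    (A₀ : H₀ →ₗ.[𝕜] H₁) (A₁ : H₁ →ₗ.[𝕜] H₂)
    (h₀dense : Dense (A₀.domain : Set H₀)) (h₀closed : A₀.IsClosed)
    (h₁dense : Dense (A₁.domain : Set H₁)) (h₁closed : A₁.IsClosed)
    (hcomplex : LinearMap.range A₀.toFun ≤ A₁.kerSub)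
    (hcpt : ∀ x : ℕ → H₁, ∀ (h₁ : ∀ n, x n ∈ A₁.domain) (h₂ : ∀ n, x n ∈ A₀.adjoint.domain),
      (∃ C : ℝ, ∀ n,
        ‖x n‖ + ‖A₁ ⟨x n, h₁ n⟩‖ + ‖A₀.adjoint ⟨x n, h₂ n⟩‖ ≤ C) →
      ∃ φ : ℕ → ℕ, StrictMono φ ∧
        ∃ l : H₁, Tendsto (fun n => x (φ n)) atTop (𝓝 l)) :
    ∃ c₀ c₁ : ℝ, 0 < c₀ ∧ 0 < c₁ ∧
      (∀ x : A₀.domain, (x : H₀) ∈ (A₀.kerSub)ᗮ → ‖(x : H₀)‖ ≤ c₀ * ‖A₀ x‖) ∧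
      (∀ y : A₀.adjoint.domain, (y : H₁) ∈ (A₀.adjoint.kerSub)ᗮ →
        ‖(y : H₁)‖ ≤ c₀ * ‖A₀.adjoint y‖) ∧
      (∀ y : A₁.domain, (y : H₁) ∈ (A₁.kerSub)ᗮ → ‖(y : H₁)‖ ≤ c₁ * ‖A₁ y‖) ∧
      (∀ z : A₁.adjoint.domain, (z : H₂) ∈ (A₁.adjoint.kerSub)ᗮ →
        ‖(z : H₂)‖ ≤ c₁ * ‖A₁.adjoint z‖) ∧
      (∀ y : H₁, ∀ (hy₁ : y ∈ A₁.domain) (hy₂ : y ∈ A₀.adjoint.domain),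
        y ∈ (A₁.kerSub ⊓ A₀.adjoint.kerSub : Submodule 𝕜 H₁)ᗮ →
        ‖y‖ ^ 2 ≤ c₀ ^ 2 * ‖A₀.adjoint ⟨y, hy₂⟩‖ ^ 2 + c₁ ^ 2 * ‖A₁ ⟨y, hy₁⟩‖ ^ 2) := by
  have hadjc : A₀.adjoint.IsClosed := adjoint_isClosed h₀dense
  have hK₁ : A₁.kerSubᗮ ≤ A₀.adjoint.kerSub :=
    (Submodule.orthogonal_le hcomplex).trans (orthogonal_range_le_kerSub_adjoint h₀dense)
  have hK₀ : A₀.adjoint.kerSubᗮ ≤ A₁.kerSub := by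
    refine (Submodule.orthogonal_le (orthogonal_range_le_kerSub_adjoint h₀dense)).trans ?_
    rw [Submodule.orthogonal_orthogonal_eq_closure]
    exact Submodule.topologicalClosure_minimal _ hcomplex (isClosed_kerSub h₁closed)
  obtain ⟨c₀, hc₀, hb₀⟩ := exists_bound_of_compact hadjc (by
    intro x hxk hx1 hxA
    have hx := fun n => (mem_kerSub_iff _ _).mp (hK₀ (hxk n))
    refine hcpt (fun n => x n) (fun n => (hx n).1) (fun n => (x n).2) ⟨2, fun n => ?_⟩
    have h1 := hx1 n
    have h2 := hxA n
    rw [(hx n).2, norm_zero]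
    change ‖(x n : H₁)‖ + 0 + ‖A₀.adjoint (x n)‖ ≤ 2
    linarith)
  obtain ⟨c₁, hc₁, hb₁⟩ := exists_bound_of_compact h₁closed (by
    intro x hxk hx1 hxA
    have hx := fun n => (mem_kerSub_iff _ _).mp (hK₁ (hxk n))
    refine hcpt (fun n => x n) (fun n => (x n).2) (fun n => (hx n).1) ⟨2, fun n => ?_⟩
    have h1 := hx1 n
    have h2 := hxA n
    rw [(hx n).2, norm_zero]
    change ‖(x n : H₁)‖ + ‖A₁ (x n)‖ + 0 ≤ 2
    linarith)
  refine ⟨c₀, c₁, hc₀, hc₁, ?_, hb₀, hb₁, ?_, ?_⟩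
  · exact bound_transfer hadjc (adjoint_isFormalAdjoint h₀dense).symm
      (orthogonal_range_adjoint_le h₀dense h₀closed) hb₀
  · exact bound_transfer h₁closed (adjoint_isFormalAdjoint h₁dense)
      (orthogonal_range_le_kerSub_adjoint h₁dense) hb₁
  · intro y hy₁ hy₂ hy
    obtain ⟨q, hq, hAq, hp⟩ := exists_reduced_preimage h₁closed ⟨y, hy₁⟩
    change y - (q : H₁) ∈ A₁.kerSub at hp
    obtain ⟨hqd, hq0⟩ := (mem_kerSub_iff _ _).mp (hK₁ hq)
    have hpd : y - (q : H₁) ∈ A₀.adjoint.domain := Submodule.sub_mem _ hy₂ hqd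
    have hAp : A₀.adjoint ⟨y - q, hpd⟩ = A₀.adjoint ⟨y, hy₂⟩ := by
      have h := A₀.adjoint.map_sub ⟨y, hy₂⟩ ⟨q, hqd⟩
      rw [hq0, sub_zero] at h
      exact h
    have hpo : y - (q : H₁) ∈ A₀.adjoint.kerSubᗮ := by
      rw [Submodule.mem_orthogonal]
      intro w hw
      have : CompleteSpace A₁.kerSub := (isClosed_kerSub h₁closed).completeSpace_coe
      -- Only the `N(A₁)` component of `w` sees `y - q`, and it lies in `N(A₁) ∩ N(A₀†)`.
      have hwo := Submodule.sub_starProjection_mem_orthogonal (K := A₁.kerSub) w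
      have hwk : A₁.kerSub.starProjection w ∈ A₁.kerSub := Submodule.starProjection_apply_mem _ _
      have hwa : A₁.kerSub.starProjection w ∈ A₀.adjoint.kerSub := by
        have h := Submodule.sub_mem _ hw (hK₁ hwo)
        rwa [sub_sub_cancel] at h
      have e1 : inner 𝕜 (w - A₁.kerSub.starProjection w) (y - (q : H₁)) = 0 :=
        Submodule.inner_left_of_mem_orthogonal hp hwo
      have e2 : inner 𝕜 (A₁.kerSub.starProjection w) y = 0 :=
        Submodule.inner_right_of_mem_orthogonal (Submodule.mem_inf.mpr ⟨hwk, hwa⟩) hy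
      have e3 : inner 𝕜 (A₁.kerSub.starProjection w) (q : H₁) = 0 :=
        Submodule.inner_right_of_mem_orthogonal hwk hq
      rw [inner_sub_left, inner_sub_right (A₁.kerSub.starProjection w), e2, e3, sub_zero,
        sub_zero] at e1
      exact e1
    have b0 := hb₀ ⟨y - q, hpd⟩ hpo
    have b1 := hb₁ q hq
    rw [hAp] at b0
    rw [hAq] at b1
    have hpyth : ‖y‖ ^ 2 = ‖y - (q : H₁)‖ ^ 2 + ‖(q : H₁)‖ ^ 2 := by
      have h := norm_add_sq_eq_norm_sq_add_norm_sq_of_inner_eq_zero (𝕜 := 𝕜) (y - (q : H₁)) q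
        (Submodule.inner_right_of_mem_orthogonal hp hq)
      rw [sub_add_cancel] at h
      simpa only [sq] using h
    rw [hpyth, ← mul_pow, ← mul_pow]
    gcongr
end
end

section
/- Let A₁ : D(A₁) ⊂ H₁ → H₂ be a densely defined closed linear operator between Hilbert spaces whose range R(A₁) is closed. Let H₁⁺ be a regular subspace for A₁ with embedding ι₁, and suppose there exist linear operators Q : D(A₁) → H₁⁺ and N : D(A₁) → H₁ with range of N contained in N(A₁), both bounded with respect to the graph norm ‖x‖_{H₁} + ‖A₁x‖_{H₂} on D(A₁), such that ι₁(Qx) + Nx = x for all x ∈ D(A₁) (a weak bounded regular decomposition). Then there exists a bounded linear operator P : R(A₁) → H₁⁺ (R(A₁) carrying the H₂-norm) such that A₁(ι₁(Pz)) = z for all z ∈ R(A₁); indeed P := Q ∘ (A₁)_⊥⁻¹ works, where (A₁)_⊥⁻¹ z is the unique x ∈ D(A₁) ∩ N(A₁)^⊥ with A₁x = z. -/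
/-! The potential operator is `P = Q ∘ S`, where `S z` is the solution of `A₁ x = z` orthogonal to
`N(A₁)`. Since `A₁ (N x) = 0`, applying `A₁` to `ι₁ (Q x) + N x = x` gives `A₁ (ι₁ (Q x)) = A₁ x`, so
`P` is a right inverse of `A₁ ∘ ι₁`. Boundedness of `P` reduces to that of `S`: the open mapping
theorem, applied to the projection of the (complete) graph of `A₁` onto the (complete) range, gives
some solution `x` with `‖x‖ ≤ C ‖z‖`, and `S z` is the orthogonal projection of any solution
onto `N(A₁)ᗮ`, so `‖S z‖ ≤ ‖x‖`. -/

open Filter Topology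

noncomputable section

theorem LinearPMap.mem_kerSub_iff_s15 {𝕜 E F : Type*} [RCLike 𝕜] [NormedAddCommGroup E]
    [InnerProductSpace 𝕜 E] [NormedAddCommGroup F] [InnerProductSpace 𝕜 F]
    (A : E →ₗ.[𝕜] F) (x : E) : x ∈ A.kerSub ↔ ∃ h : x ∈ A.domain, A ⟨x, h⟩ = 0 := by
  constructor
  · rintro ⟨y, hy, rfl⟩
    exact ⟨y.2, hy⟩
  · rintro ⟨h, hx⟩
    exact ⟨⟨x, h⟩, hx, rfl⟩

theorem LinearPMap.IsClosed.isClosed_kerSub {𝕜 E F : Type*} [RCLike 𝕜] [NormedAddCommGroup E]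
    [InnerProductSpace 𝕜 E] [NormedAddCommGroup F] [InnerProductSpace 𝕜 F]
    {A : E →ₗ.[𝕜] F} (hA : A.IsClosed) : _root_.IsClosed (A.kerSub : Set E) := by
  -- The kernel is the preimage of the graph under `x ↦ (x, 0)`.
  have hpre : (A.kerSub : Set E) = (fun x : E => (x, (0 : F))) ⁻¹' (A.graph : Set (E × F)) := by
    ext x
    simp only [SetLike.mem_coe, Set.mem_preimage, LinearPMap.mem_kerSub_iff_s15,
      LinearPMap.mem_graph_iff]
    constructor
    · rintro ⟨h, hx⟩
      exact ⟨⟨x, h⟩, rfl, hx⟩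
    · rintro ⟨y, rfl, hy⟩
      exact ⟨y.2, hy⟩
  rw [hpre]
  exact _root_.IsClosed.preimage (by fun_prop) hA

/-- Open mapping theorem for a closed operator with closed range: every `z` in the range has a
preimage whose norm is controlled by that of `z`. -/
theorem LinearPMap.IsClosed.exists_preimage_norm_le {𝕜 E F : Type*} [RCLike 𝕜]
    [NormedAddCommGroup E] [InnerProductSpace 𝕜 E] [CompleteSpace E]
    [NormedAddCommGroup F] [InnerProductSpace 𝕜 F] [CompleteSpace F]
    {A : E →ₗ.[𝕜] F} (hA : A.IsClosed)
    (hran : _root_.IsClosed (LinearMap.range A.toFun : Set F)) :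
    ∃ C : ℝ, ∀ z : LinearMap.range A.toFun,
      ∃ x : A.domain, A x = z ∧ ‖(x : E)‖ ≤ C * ‖(z : F)‖ := by
  have : CompleteSpace A.graph := _root_.IsClosed.completeSpace_coe (hs := hA)
  have : CompleteSpace (LinearMap.range A.toFun) :=
    _root_.IsClosed.completeSpace_coe (hs := hran)
  let f : A.graph →L[𝕜] LinearMap.range A.toFun :=
    ((ContinuousLinearMap.snd 𝕜 E F).comp A.graph.subtypeL).codRestrict _ (by
      rintro ⟨p, hp⟩
      obtain ⟨y, -, hy⟩ := A.mem_graph_iff.1 hp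
      exact ⟨y, hy⟩)
  have hf : Function.Surjective f := by
    rintro ⟨z, y, rfl⟩
    exact ⟨⟨(y, A y), A.mem_graph y⟩, rfl⟩
  obtain ⟨C, -, hC⟩ := f.exists_preimage_norm_le hf
  refine ⟨C, fun z => ?_⟩
  obtain ⟨⟨p, hp⟩, hpz, hle⟩ := hC z
  obtain ⟨y, hy₁, hy₂⟩ := A.mem_graph_iff.1 hp
  refine ⟨y, ?_, ?_⟩
  · rw [hy₂, ← hpz]
    rfl
  · rw [hy₁]
    exact (norm_fst_le p).trans hle

/-- The inverse of `A` restricted to `D(A) ∩ N(A)ᗮ`, as a bounded linear right inverse of `A`. -/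
theorem LinearPMap.IsClosed.exists_bounded_rightInverse {𝕜 E F : Type*} [RCLike 𝕜]
    [NormedAddCommGroup E] [InnerProductSpace 𝕜 E] [CompleteSpace E]
    [NormedAddCommGroup F] [InnerProductSpace 𝕜 F] [CompleteSpace F]
    {A : E →ₗ.[𝕜] F} (hA : A.IsClosed)
    (hran : _root_.IsClosed (LinearMap.range A.toFun : Set F)) :
    ∃ S : LinearMap.range A.toFun →ₗ[𝕜] A.domain,
      (∀ z, A (S z) = z) ∧ (∀ z, (S z : E) ∈ A.kerSubᗮ) ∧
      ∃ C : ℝ, ∀ z, ‖(S z : E)‖ ≤ C * ‖(z : F)‖ := by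
  have : CompleteSpace A.kerSub := _root_.IsClosed.completeSpace_coe (hs := hA.isClosed_kerSub)
  -- An algebraic linear right inverse `g`, to be corrected by projecting onto `N(A)ᗮ`.
  obtain ⟨g, hg⟩ := A.toFun.rangeRestrict.exists_rightInverse_of_surjective
    A.toFun.range_rangeRestrict
  have hg' : ∀ z, A (g z) = z := fun z => congrArg Subtype.val (LinearMap.congr_fun hg z)
  have hker : ∀ x : E, ∃ h : A.kerSub.starProjection x ∈ A.domain,
      A ⟨A.kerSub.starProjection x, h⟩ = 0 := fun x =>
    (A.mem_kerSub_iff_s15 _).1 (A.kerSub.starProjection_apply_mem x)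
  let k : E →ₗ[𝕜] A.domain :=
    A.kerSub.starProjection.toLinearMap.codRestrict A.domain (fun x => (hker x).1)
  have hk : ∀ x, A (k x) = 0 := fun x => (hker x).2
  let S : LinearMap.range A.toFun →ₗ[𝕜] A.domain := g - k ∘ₗ A.domain.subtype ∘ₗ g
  have hS : ∀ z, (S z : E) = A.kerSubᗮ.starProjection (g z) := fun z => by
    rw [Submodule.starProjection_orthogonal_val]
    rfl
  refine ⟨S, fun z => ?_, fun z => ?_, ?_⟩
  · change A (g z - k (g z)) = z
    rw [A.map_sub, hk, hg', sub_zero]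
  · rw [hS]
    exact Submodule.starProjection_apply_mem _ _
  · obtain ⟨C, hC⟩ := hA.exists_preimage_norm_le hran
    refine ⟨C, fun z => ?_⟩
    obtain ⟨x, hx, hle⟩ := hC z
    -- `g z` and `x` differ by an element of the kernel, so they have the same projection.
    have hmem : ((g z : E) - x) ∈ A.kerSub :=
      (A.mem_kerSub_iff_s15 _).2 ⟨(g z - x).2, by
        change A (g z - x) = 0
        rw [A.map_sub, hg', hx, sub_self]⟩
    have hproj : A.kerSubᗮ.starProjection (g z : E) = A.kerSubᗮ.starProjection (x : E) := by
      rw [← sub_eq_zero, ← _root_.map_sub, Submodule.starProjection_apply_eq_zero_iff]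
      exact A.kerSub.le_orthogonal_orthogonal hmem
    rw [hS, hproj]
    exact (Submodule.norm_starProjection_apply_le _ _).trans hle

/-- Let `A₁` be densely defined and closed with closed range, let `H₁p` be a
regular subspace for `A₁` (with embedding `ι₁`), and assume a weak bounded regular
decomposition `D(A₁) = H₁p + N(A₁)` given by graph-norm bounded operators `Q` and `N`.
Then there is a bounded linear regular potential operator `P : R(A₁) → H₁p` with
`A₁ (ι₁ (P z)) = z` for all `z ∈ R(A₁)`. -/
theorem bounded_regular_potential_of_weak_bounded_regular_decomposition
    {𝕜 H₁ H₂ H₁p : Type*} [RCLike 𝕜]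
    [NormedAddCommGroup H₁] [InnerProductSpace 𝕜 H₁] [CompleteSpace H₁]
    [NormedAddCommGroup H₂] [InnerProductSpace 𝕜 H₂] [CompleteSpace H₂]
    [NormedAddCommGroup H₁p] [InnerProductSpace 𝕜 H₁p] [CompleteSpace H₁p]
    (A₁ : H₁ →ₗ.[𝕜] H₂)
    (h₁dense : Dense (A₁.domain : Set H₁)) (h₁closed : A₁.IsClosed)
    (hran : IsClosed (LinearMap.range A₁.toFun : Set H₂))
    (ι₁ : H₁p →L[𝕜] H₁) (hι₁inj : Function.Injective ι₁)
    (hι₁dom : ∀ u : H₁p, ι₁ u ∈ A₁.domain)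
    (hι₁graph : ∃ C : ℝ, ∀ u : H₁p, ‖A₁ ⟨ι₁ u, hι₁dom u⟩‖ ≤ C * ‖u‖)
    (Q : A₁.domain →ₗ[𝕜] H₁p) (N : A₁.domain →ₗ[𝕜] H₁)
    (hQbd : ∃ C : ℝ, ∀ x : A₁.domain, ‖Q x‖ ≤ C * (‖(x : H₁)‖ + ‖A₁ x‖))
    (hNbd : ∃ C : ℝ, ∀ x : A₁.domain, ‖N x‖ ≤ C * (‖(x : H₁)‖ + ‖A₁ x‖))
    (hNker : ∀ x : A₁.domain, N x ∈ A₁.kerSub)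
    (hdeco : ∀ x : A₁.domain, ι₁ (Q x) + N x = (x : H₁)) :
    ∃ P : LinearMap.range A₁.toFun →ₗ[𝕜] H₁p,
      (∃ C : ℝ, ∀ z : LinearMap.range A₁.toFun, ‖P z‖ ≤ C * ‖(z : H₂)‖) ∧
      (∀ z : LinearMap.range A₁.toFun, A₁ ⟨ι₁ (P z), hι₁dom (P z)⟩ = (z : H₂)) := by
  obtain ⟨S, hAS, -, C, hC⟩ := h₁closed.exists_bounded_rightInverse hran
  obtain ⟨c, hc⟩ := hQbd
  refine ⟨Q ∘ₗ S, ⟨|c| * (C + 1), fun z => ?_⟩, fun z => ?_⟩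
  · calc ‖Q (S z)‖ ≤ c * (‖(S z : H₁)‖ + ‖A₁ (S z)‖) := hc _
      _ ≤ |c| * (‖(S z : H₁)‖ + ‖A₁ (S z)‖) := by
        gcongr
        exact le_abs_self c
      _ ≤ |c| * (C * ‖(z : H₂)‖ + ‖(z : H₂)‖) := by
        rw [hAS]
        gcongr
        exact hC z
      _ = |c| * (C + 1) * ‖(z : H₂)‖ := by ring
  · obtain ⟨hN, hN0⟩ := (A₁.mem_kerSub_iff_s15 _).1 (hNker (S z))
    have hsplit : (⟨ι₁ (Q (S z)), hι₁dom _⟩ : A₁.domain) = S z - ⟨N (S z), hN⟩ :=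
      Subtype.ext (eq_sub_of_add_eq (hdeco (S z)))
    change A₁ ⟨ι₁ (Q (S z)), hι₁dom _⟩ = z
    rw [hsplit, A₁.map_sub, hAS, hN0, sub_zero]
end
end
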